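/- For every positive integer k, there exists a k-connected graph G with χ_T(G) ≠ χ_P(G). Specifically, for every odd n ≥ max(5,k) and m ≥ n+4, the graph R_m(C_n) is k-connected with tree-chromatic number 2 and path-chromatic number 3. -/

import Mathlib

open SimpleGraph

universe u
variable {V : Type u}

/-- Closed neighborhood of a vertex set. -/
def closedNbhd (G : SimpleGraph V) (U : Set V) : Set V :=
  U ∪ {v | ∃ u ∈ U, G.Adj u v}

/-- Bag `X_ℓ = N[{v_1,…,v_ℓ}] \ {v_1,…,v_{ℓ-1}}` of the enumeration `σ`. -/
def bagX {n : ℕ} (G : SimpleGraph V) (σ : Fin n ≃ V) (ℓ : Fin n) : Set V :=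
  closedNbhd G {v | ∃ j ≤ ℓ, v = σ j} \ {v | ∃ j < ℓ, v = σ j}

/-- Chromatic number of the subgraph induced by `S`. -/
noncomputable def chrom (G : SimpleGraph V) (S : Set V) : ℕ :=
  sInf {k | (G.induce S).Colorable k}

/-- Chromatic number of the path-decomposition `P_σ^G`. -/
noncomputable def decompChrom {n : ℕ} (G : SimpleGraph V) (σ : Fin n ≃ V) : ℕ :=
  sInf {k | ∀ ℓ, (G.induce (bagX G σ ℓ)).Colorable k}

/-- `B` is a path-decomposition of `G`. -/
def IsPathDecomp (G : SimpleGraph V) {s : ℕ} (B : Fin s → Set V) : Prop :=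
  (∀ v, ∃ t, v ∈ B t) ∧
  (∀ u v, G.Adj u v → ∃ t, u ∈ B t ∧ v ∈ B t) ∧
  (∀ v (t₁ t₂ t₃ : Fin s), t₁ ≤ t₂ → t₂ ≤ t₃ → v ∈ B t₁ → v ∈ B t₃ → v ∈ B t₂)

/-- Path-chromatic number. -/
noncomputable def pathChromatic (G : SimpleGraph V) : ℕ :=
  sInf {k | ∃ (s : ℕ) (B : Fin s → Set V), IsPathDecomp G B ∧
    ∀ t, (G.induce (B t)).Colorable k}

/-- `(T, B)` is a tree-decomposition of `G`. -/
def IsTreeDecomp {ι : Type u} (G : SimpleGraph V) (T : SimpleGraph ι) (B : ι → Set V) : Prop :=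
  T.IsTree ∧
  (∀ v, ∃ t, v ∈ B t) ∧
  (∀ u v, G.Adj u v → ∃ t, u ∈ B t ∧ v ∈ B t) ∧
  (∀ v, (T.induce {t | v ∈ B t}).Connected)

/-- Tree-chromatic number. -/
noncomputable def treeChromatic (G : SimpleGraph V) : ℕ :=
  sInf {k | ∃ (ι : Type u) (T : SimpleGraph ι) (B : ι → Set V),
    IsTreeDecomp G T B ∧ ∀ t, (G.induce (B t)).Colorable k}

/-- A special enumeration. -/
def IsSpecial {n : ℕ} (G : SimpleGraph V) (σ : Fin n ≃ V) : Prop :=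
  decompChrom G σ = pathChromatic G ∧
  ∀ i : Fin n, chrom G (bagX G σ i) = pathChromatic G →
    ∀ j : Fin n, j < i → ¬ G.Adj (σ j) (σ i)

/-- The graph `R_m(G)`; the vertex `(i, none)` plays the role of `(i, v₀)`. -/
def Rm (G : SimpleGraph V) (m : ℕ) : SimpleGraph (Fin m × Option V) :=
  SimpleGraph.fromRel (fun p q =>
    (p.1 = q.1 ∧ p.2 = none) ∨
    (p.1 ≠ q.1 ∧ ∃ u v, p.2 = some u ∧ q.2 = some v ∧ G.Adj u v))

/-- `[I, U] = { (i, v) : i ∈ I, v ∈ U }` inside `R_m(G)`. -/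
def box {m : ℕ} (I : Set (Fin m)) (U : Set V) : Set (Fin m × Option V) :=
  {p | p.1 ∈ I ∧ ∃ v ∈ U, p.2 = some v}

/-- Index of the first vertex in the enumeration `μ` satisfying `P`. -/
noncomputable def firstIdx {N : ℕ} {W : Type*} (μ : Fin N ≃ W) (P : W → Prop) : ℕ :=
  sInf {ℓ : ℕ | ∃ h : ℓ < N, P (μ ⟨ℓ, h⟩)}

/-- The cycle `C_n`: `v_j ~ v_{j'}` iff `|j - j'| ∈ {1, n-1}`. -/
def cyc (n : ℕ) : SimpleGraph (Fin n) :=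
  SimpleGraph.fromRel (fun a b => (b : ℕ) - (a : ℕ) = 1 ∨ (b : ℕ) - (a : ℕ) = n - 1)

/-- The Mycielskian of a graph. -/
def mycielskian (G : SimpleGraph V) : SimpleGraph (Option (V ⊕ V)) :=
  SimpleGraph.fromRel (fun a b =>
    match a, b with
    | some (Sum.inl u), some (Sum.inl v) => G.Adj u v
    | some (Sum.inr u), some (Sum.inl v) => G.Adj u v
    | none, some (Sum.inr _) => True
    | _, _ => False)

/-- Vertex types and graphs of the Mycielski family: `MycS 2` is a single edge. -/
def MycS : ℕ → Σ W : Type, SimpleGraph W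
  | 0 => ⟨Empty, ⊥⟩
  | 1 => ⟨Empty, ⊥⟩
  | 2 => ⟨Fin 2, ⊤⟩
  | (n + 3) => ⟨Option ((MycS (n + 2)).1 ⊕ (MycS (n + 2)).1), mycielskian (MycS (n + 2)).2⟩

/-- The vertex type of the `k`-Mycielski graph. -/
def MycV (k : ℕ) : Type := (MycS k).1

/-- The `k`-Mycielski graph `M_k`. -/
def Myc (k : ℕ) : SimpleGraph (MycV k) := (MycS k).2

/-- An interval representation of (a path-decomposition of) `R_m(H)` with bipartite bags. -/
structure BipRep {V : Type} (H : SimpleGraph V) (ι : Type) where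
  lo : ι → V → ℤ
  hi : ι → V → ℤ
  lo0 : ι → ℤ
  hi0 : ι → ℤ
  h0 : ∀ i, lo0 i ≤ hi0 i
  h1 : ∀ i v, lo i v ≤ hi0 i
  h2 : ∀ i v, lo0 i ≤ hi i v
  h3 : ∀ i j u v, i ≠ j → H.Adj u v → lo i u ≤ hi j v
  hc : ∀ t : ℤ, ∃ c : ι → V → Bool, ∃ c0 : ι → Bool,
    (∀ i v, lo0 i ≤ t → t ≤ hi0 i → lo i v ≤ t → t ≤ hi i v → c0 i ≠ c i v) ∧
    (∀ i j u v, i ≠ j → H.Adj u v → lo i u ≤ t → t ≤ hi i u → lo j v ≤ t → t ≤ hi j v →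
      c i u ≠ c j v)

/-- Time reversal. -/
def BipRep.rev {V : Type} {H : SimpleGraph V} {ι : Type} (R : BipRep H ι) : BipRep H ι where
  lo := fun i v => - R.hi i v
  hi := fun i v => - R.lo i v
  lo0 := fun i => - R.hi0 i
  hi0 := fun i => - R.lo0 i
  h0 := fun i => neg_le_neg (R.h0 i)
  h1 := fun i v => neg_le_neg (R.h2 i v)
  h2 := fun i v => neg_le_neg (R.h1 i v)
  h3 := fun i j u v hij h => neg_le_neg (R.h3 j i v u hij.symm h.symm)
  hc := by
    intro t
    obtain ⟨c, c0, h, h'⟩ := R.hc (-t)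
    refine ⟨c, c0, ?_, ?_⟩
    · intro i v a1 a2 a3 a4
      exact h i v (by linarith) (by linarith) (by linarith) (by linarith)
    · intro i j u v hij huv a1 a2 a3 a4
      exact h' i j u v hij huv (by linarith) (by linarith) (by linarith) (by linarith)

lemma exists_other {ι : Type} [DecidableEq ι] (T : Finset ι) (hT : 3 ≤ T.card) (a b : ι) :
    ∃ w ∈ T, w ≠ a ∧ w ≠ b := by
  by_contra hcon
  push Not at hcon
  have : T ⊆ {a, b} := by
    intro w hw
    by_cases h : w = a
    · simp [h]
    · simp [hcon w hw h]
  have h2 := Finset.card_le_card this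
  have h3 : ({a, b} : Finset ι).card ≤ 2 := Finset.card_le_two
  omega

/-- Two adjacent columns with at least three bag elements have constant, opposite colours. -/
lemma big_const {ι : Type} [DecidableEq ι] (P Q : ι → Prop) (c d : ι → Bool)
    (h : ∀ x y, x ≠ y → P x → Q y → c x ≠ d y)
    (S T : Finset ι) (hS : 3 ≤ S.card) (hT : 3 ≤ T.card) (hSP : ∀ x ∈ S, P x)
    (hTQ : ∀ x ∈ T, Q x) (x y : ι) (hx : P x) (hy : Q y) : c x ≠ d y := by
  by_cases hxy : x = y
  · subst hxy
    obtain ⟨x', hx', hne, -⟩ := exists_other S hS x x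
    obtain ⟨w, hw, hw1, hw2⟩ := exists_other T hT x x'
    have e1 := h x w hw1.symm hx (hTQ w hw)
    have e2 := h x' w hw2.symm (hSP x' hx') (hTQ w hw)
    have e3 := h x' x hne (hSP x' hx') hy
    revert e1 e2 e3
    cases c x <;> cases c x' <;> cases d w <;> cases d x <;> simp
  · exact h x y hxy hx hy

lemma lemma_fA {V : Type} {H : SimpleGraph V} {ι : Type} [DecidableEq ι] (R : BipRep H ι) (p : ℤ)
    (Rt K : Finset ι) (hRt : 3 ≤ Rt.card) (hR : ∀ k ∈ Rt, p ≤ R.lo0 k)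
    (hK : 3 ≤ K.card) (hK' : ∀ k ∈ K, R.lo0 k ≤ p ∧ p ≤ R.hi0 k)
    (A : V → Prop)
    (hA : ∀ v, A v ↔ ∃ k ∈ K, ∃ k' ∈ K, k ≠ k' ∧ R.hi k v < p ∧ R.hi k' v < p) :
    ∃ f : V → Bool, (∀ v, ¬ A v → f v = false) ∧ ∀ v w, H.Adj v w → A v → f v ≠ f w := by
  classical
  obtain ⟨c, c0, hc0, hc⟩ := R.hc p
  have hRhi : ∀ k ∈ Rt, ∀ v, p ≤ R.hi k v := fun k hk v => (hR k hk).trans (R.h2 k v)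
  obtain ⟨k0, hk0⟩ : Rt.Nonempty := Finset.card_pos.mp (by omega)
  obtain ⟨k1, hk1, k2, hk2, hk12, hcol⟩ : ∃ x ∈ K, ∃ y ∈ K, x ≠ y ∧ c0 x = c0 y := by
    apply Finset.exists_ne_map_eq_of_card_lt_of_maps_to (t := (Finset.univ : Finset Bool))
    · simp; omega
    · intro x _; simp
  have hAR : ∀ v w, H.Adj v w → A v → ∀ k, R.lo k w < p := by
    intro v w hvw hv k
    obtain ⟨a, _, b, _, hab, h1, h2⟩ := (hA v).1 hv
    by_cases hka : k = a
    · have := R.h3 k b w v (by rw [hka]; exact hab) hvw.symm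
      omega
    · have := R.h3 k a w v hka hvw.symm
      omega
  let Z : V → Prop := fun v => ∃ k ∈ Rt, p < R.lo k v
  have hZA : ∀ v w, H.Adj v w → Z v → ¬ A w := by
    intro v w hvw ⟨k, hk, hlt⟩ hw
    have := hAR w v hvw.symm hw k
    omega
  have hBig : ∀ v w, H.Adj v w → ¬ Z v → ¬ Z w → ∀ x y, R.lo x v ≤ p → p ≤ R.hi x v →
      R.lo y w ≤ p → p ≤ R.hi y w → c x v ≠ c y w := by
    intro v w hvw hv hw x y a1 a2 a3 a4
    have hv' : ∀ k ∈ Rt, R.lo k v ≤ p := fun k hk => not_lt.1 fun h => hv ⟨k, hk, h⟩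
    have hw' : ∀ k ∈ Rt, R.lo k w ≤ p := fun k hk => not_lt.1 fun h => hw ⟨k, hk, h⟩
    exact big_const (fun k => R.lo k v ≤ p ∧ p ≤ R.hi k v) (fun k => R.lo k w ≤ p ∧ p ≤ R.hi k w)
      (fun k => c k v) (fun k => c k w)
      (fun x y hxy hx hy => hc x y v w hxy hvw hx.1 hx.2 hy.1 hy.2) Rt Rt hRt hRt
      (fun k hk => ⟨hv' k hk, hRhi k hk v⟩) (fun k hk => ⟨hw' k hk, hRhi k hk w⟩) x y
      ⟨a1, a2⟩ ⟨a3, a4⟩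
  refine ⟨fun v => decide (A v ∧ (Z v ∨ c k0 v = c0 k1)), ?_, ?_⟩
  · intro v hv
    simp [hv]
  · intro v w hvw hv
    have hwZ : ¬ Z w := fun h => hZA w v hvw.symm h hv
    by_cases hvZ : Z v
    · have hw := hZA v w hvw hvZ
      simp [hv, hvZ, hw]
    · have hB0v : R.lo k0 v ≤ p := not_lt.1 fun h => hvZ ⟨k0, hk0, h⟩
      have hB0w : R.lo k0 w ≤ p := not_lt.1 fun h => hwZ ⟨k0, hk0, h⟩
      by_cases hw : A w
      · have := hBig v w hvw hvZ hwZ k0 k0 hB0v (hRhi k0 hk0 v) hB0w (hRhi k0 hk0 w)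
        simp only [hv, hw, hvZ, hwZ, true_and, false_or, ne_eq, decide_eq_decide]
        revert this
        cases c k0 v <;> cases c k0 w <;> cases c0 k1 <;> simp
      · skip
        obtain ⟨k, hkK, hkc, hkhi⟩ : ∃ k ∈ K, c0 k = c0 k1 ∧ p ≤ R.hi k w := by
          by_cases h1 : p ≤ R.hi k1 w
          · exact ⟨k1, hk1, rfl, h1⟩
          by_cases h2 : p ≤ R.hi k2 w
          · exact ⟨k2, hk2, hcol.symm, h2⟩
          exact absurd ((hA w).2 ⟨k1, hk1, k2, hk2, hk12, not_le.1 h1, not_le.1 h2⟩) hw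
        have hklo := (hAR v w hvw hv k).le
        have e1 := hc0 k w (hK' k hkK).1 (hK' k hkK).2 hklo hkhi
        have e2 := hBig v w hvw hvZ hwZ k0 k hB0v (hRhi k0 hk0 v) hklo hkhi
        have e3 : c k0 v = c0 k1 := by
          rw [← hkc]
          revert e1 e2
          cases c k0 v <;> cases c k w <;> cases c0 k <;> simp
        simp [hv, hw, e3]

/-- Order statistics: `r+1`-st smallest. -/
lemma order_stat {ι : Type} [DecidableEq ι] (g : ι → ℤ) (r : ℕ) : ∀ (K : Finset ι), r + 1 ≤ K.card →
    ∃ S ⊆ K, S.card = r + 1 ∧ ∃ j ∈ S, (∀ i ∈ S, g i ≤ g j) ∧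
      (K.filter (fun i => g i < g j)).card ≤ r := by
  induction r with
  | zero =>
    intro K hK
    obtain ⟨j, hj, hmin⟩ := Finset.exists_min_image K g (Finset.card_pos.mp (by omega))
    refine ⟨{j}, by simpa using hj, by simp, j, by simp, by simp, ?_⟩
    simp only [Nat.le_zero, Finset.card_eq_zero, Finset.filter_eq_empty_iff, not_lt]
    exact fun i hi => hmin i hi
  | succ r ih =>
    intro K hK
    obtain ⟨a, ha, hmin⟩ := Finset.exists_min_image K g (Finset.card_pos.mp (by omega))
    obtain ⟨S, hSK, hS, j, hj, hSj, hcard⟩ := ih (K.erase a) (by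
      rw [Finset.card_erase_of_mem ha]; omega)
    have haS : a ∉ S := fun h => by simpa using hSK h
    refine ⟨insert a S, ?_, ?_, j, by simp [hj], ?_, ?_⟩
    · intro x hx
      rcases Finset.mem_insert.1 hx with rfl | hx
      · exact ha
      · exact Finset.mem_of_mem_erase (hSK hx)
    · rw [Finset.card_insert_of_notMem haS, hS]
    · intro i hi
      rcases Finset.mem_insert.1 hi with rfl | hi
      · exact hmin j (Finset.mem_of_mem_erase (hSK hj))
      · exact hSj i hi
    · have : K.filter (fun i => g i < g j) ⊆ insert a ((K.erase a).filter (fun i => g i < g j)) := by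
        intro x hx
        simp only [Finset.mem_filter, Finset.mem_insert, Finset.mem_erase] at hx ⊢
        tauto
      have h1 := Finset.card_le_card this
      have h2 := Finset.card_insert_le a ((K.erase a).filter (fun i => g i < g j))
      omega

/-- The case where three rows end before three rows start. -/
lemma core_case1 {V : Type} {H : SimpleGraph V} {ι : Type} [DecidableEq ι] (R : BipRep H ι)
    (hH : ¬ ∃ f : V → Bool, ∀ u v, H.Adj u v → f u ≠ f v) (t : ℤ)
    (Lt Rt : Finset ι) (hLt : 3 ≤ Lt.card) (hRt : 3 ≤ Rt.card)
    (hL : ∀ i ∈ Lt, R.hi0 i ≤ t) (hR : ∀ i ∈ Rt, t ≤ R.lo0 i)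
    (j : ι) (hj : j ∈ Lt) (hjt : R.hi0 j = t) : False := by
  classical
  obtain ⟨c, c0, hc0, hc⟩ := R.hc t
  have hlo : ∀ i ∈ Lt, ∀ v, R.lo i v ≤ t := fun i hi v => (R.h1 i v).trans (hL i hi)
  have hhi : ∀ i ∈ Rt, ∀ v, t ≤ R.hi i v := fun i hi v => (hR i hi).trans (R.h2 i v)
  let In : ι → V → Prop := fun i v => R.lo i v ≤ t ∧ t ≤ R.hi i v
  let Z : V → Prop := fun v => ¬ (∀ i ∈ Lt, In i v) ∧ ¬ (∀ i ∈ Rt, In i v)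
  have hB : ∀ v, ¬ Z v → ∃ S : Finset ι, 3 ≤ S.card ∧ ∀ x ∈ S, In x v := by
    intro v hv
    by_cases h : ∀ i ∈ Lt, In i v
    · exact ⟨Lt, hLt, h⟩
    by_cases h' : ∀ i ∈ Rt, In i v
    · exact ⟨Rt, hRt, h'⟩
    exact absurd ⟨h, h'⟩ hv
  have hZ : ∀ v w, H.Adj v w → Z v → ∀ i ∈ Lt, In i w := by
    intro v w hvw hv i hi
    refine ⟨hlo i hi w, ?_⟩
    obtain ⟨k, hk⟩ := not_forall.1 hv.2
    obtain ⟨hkR, hk⟩ := Classical.not_imp.1 hk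
    have hklo : t < R.lo k v := not_le.1 fun h => hk ⟨h, hhi k hkR v⟩
    by_cases hki : k = i
    · subst hki; exact hhi k hkR w
    · have := R.h3 k i v w hki hvw
      omega
  let ff : V → Bool := fun v => if Z v then c0 j else if In j v then c j v else
    if h : ∃ i, In i v then c h.choose v else false
  have hff : ∀ v, ¬ Z v → ∃ i, In i v ∧ ff v = c i v := by
    intro v hv
    by_cases h1 : In j v
    · exact ⟨j, h1, by simp only [ff, if_neg hv, if_pos h1]⟩
    · obtain ⟨S, hS, hS'⟩ := hB v hv
      obtain ⟨x, hx⟩ : S.Nonempty := Finset.card_pos.mp (by omega)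
      have hex : ∃ i, In i v := ⟨x, hS' x hx⟩
      exact ⟨hex.choose, hex.choose_spec, by simp only [ff, if_neg hv, if_neg h1, dif_pos hex]⟩
  have hZadj : ∀ v w, H.Adj v w → Z v → ff v ≠ ff w := by
    intro v w hvw hv
    have hall := hZ v w hvw hv
    have hw : ¬ Z w := fun h => h.1 hall
    have hjw := hall j hj
    simp only [ff, if_pos hv, if_neg hw, if_pos hjw]
    exact hc0 j w (hjt ▸ R.h0 j) hjt.ge hjw.1 hjw.2
  refine hH ⟨ff, ?_⟩
  intro v w hvw
  by_cases hv : Z v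
  · exact hZadj v w hvw hv
  by_cases hw : Z w
  · exact (hZadj w v hvw.symm hw).symm
  obtain ⟨S, hS, hS'⟩ := hB v hv
  obtain ⟨T, hT, hT'⟩ := hB w hw
  obtain ⟨x, hx, ex⟩ := hff v hv
  obtain ⟨y, hy, ey⟩ := hff w hw
  rw [ex, ey]
  exact big_const (fun k => In k v) (fun k => In k w) (fun k => c k v) (fun k => c k w)
    (fun x y hxy hx hy => hc x y v w hxy hvw hx.1 hx.2 hy.1 hy.2) S T hS hT hS' hT' x y hx hy

/-- The case where many centres are simultaneously present on `[p, q]`. -/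
lemma core_case2 {V : Type} {H : SimpleGraph V} {ι : Type} [DecidableEq ι] (R : BipRep H ι)
    (hH : ¬ ∃ f : V → Bool, ∀ u v, H.Adj u v → f u ≠ f v) (p q : ℤ) (hpq : p ≤ q)
    (Lt Rt K : Finset ι) (hLt : 3 ≤ Lt.card) (hRt : 3 ≤ Rt.card)
    (hL : ∀ i ∈ Lt, R.hi0 i ≤ q) (hR : ∀ i ∈ Rt, p ≤ R.lo0 i)
    (hK : K.card = 5) (hK' : ∀ k ∈ K, R.lo0 k ≤ p ∧ q ≤ R.hi0 k) : False := by
  classical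
  have hα : ∀ v, ∃ a : ℤ, (∃ k ∈ K, ∃ k' ∈ K, k ≠ k' ∧ R.hi k v ≤ a ∧ R.hi k' v ≤ a) ∧
      (K.filter (fun i => R.hi i v < a)).card ≤ 1 := by
    intro v
    obtain ⟨S, hSK, hS, j, hj, hSj, hcard⟩ := order_stat (fun i => R.hi i v) 1 K (by omega)
    obtain ⟨x, y, hxy, hS2⟩ := Finset.card_eq_two.1 hS
    have hx : x ∈ S := by simp [hS2]
    have hy : y ∈ S := by simp [hS2]
    exact ⟨R.hi j v, ⟨x, hSK hx, y, hSK hy, hxy, hSj x hx, hSj y hy⟩, hcard⟩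
  have hδ : ∀ v, ∃ a : ℤ, (∃ k ∈ K, ∃ k' ∈ K, k ≠ k' ∧ a ≤ R.lo k v ∧ a ≤ R.lo k' v) ∧
      (K.filter (fun i => a < R.lo i v)).card ≤ 1 := by
    intro v
    obtain ⟨S, hSK, hS, j, hj, hSj, hcard⟩ := order_stat (fun i => - R.lo i v) 1 K (by omega)
    obtain ⟨x, y, hxy, hS2⟩ := Finset.card_eq_two.1 hS
    have hx : x ∈ S := by simp [hS2]
    have hy : y ∈ S := by simp [hS2]
    refine ⟨R.lo j v, ⟨x, hSK hx, y, hSK hy, hxy, neg_le_neg_iff.1 (hSj x hx),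
      neg_le_neg_iff.1 (hSj y hy)⟩, ?_⟩
    simpa only [neg_lt_neg_iff] using hcard
  choose α hα1 hα2 using hα
  choose δ hδ1 hδ2 using hδ
  have hcross : ∀ v w, H.Adj v w → δ w ≤ α v := by
    intro v w hvw
    obtain ⟨a, _, b, _, hab, h1, h2⟩ := hα1 v
    obtain ⟨d, _, e, _, hde, h3, h4⟩ := hδ1 w
    by_cases hda : d = a
    · have := R.h3 d b w v (by rw [hda]; exact hab) hvw.symm
      omega
    · have := R.h3 d a w v hda hvw.symm
      omega
  have pair_of : ∀ (P : ι → Prop) [DecidablePred P] (k k' : ι), k ∈ K → k' ∈ K → k ≠ k' →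
      P k → P k' → ¬ (K.filter P).card ≤ 1 := by
    intro P _ k k' hk hk' hne h h' hcard
    exact hne (Finset.card_le_one.1 hcard k (by simp [hk, h]) k' (by simp [hk', h']))
  have hAiff : ∀ v, α v < p ↔ ∃ k ∈ K, ∃ k' ∈ K, k ≠ k' ∧ R.hi k v < p ∧ R.hi k' v < p := by
    intro v
    constructor
    · intro h
      obtain ⟨a, ha, b, hb, hab, h1, h2⟩ := hα1 v
      exact ⟨a, ha, b, hb, hab, by omega, by omega⟩
    · rintro ⟨a, ha, b, hb, hab, h1, h2⟩
      by_contra hcon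
      exact pair_of (fun i => R.hi i v < α v) a b ha hb hab (by omega) (by omega) (hα2 v)
  have hDiff : ∀ v, q < δ v ↔ ∃ k ∈ K, ∃ k' ∈ K, k ≠ k' ∧
      R.rev.hi k v < -q ∧ R.rev.hi k' v < -q := by
    intro v
    simp only [BipRep.rev, neg_lt_neg_iff]
    constructor
    · intro h
      obtain ⟨a, ha, b, hb, hab, h1, h2⟩ := hδ1 v
      exact ⟨a, ha, b, hb, hab, by omega, by omega⟩
    · rintro ⟨a, ha, b, hb, hab, h1, h2⟩
      by_contra hcon
      exact pair_of (fun i => δ v < R.lo i v) a b ha hb hab (by omega) (by omega) (hδ2 v)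
  obtain ⟨fA, hfA1, hfA2⟩ := lemma_fA R p Rt K hRt hR (by omega)
    (fun k hk => ⟨(hK' k hk).1, hpq.trans (hK' k hk).2⟩) (fun v => α v < p) hAiff
  obtain ⟨fD, hfD1, hfD2⟩ := lemma_fA R.rev (-q) Lt K hLt (fun k hk => neg_le_neg (hL k hk))
    (by omega) (fun k hk => ⟨neg_le_neg (hK' k hk).2, neg_le_neg ((hK' k hk).1.trans hpq)⟩)
    (fun v => q < δ v) hDiff
  have hBB : ∀ v w t, H.Adj v w → p ≤ t → t ≤ q → δ v ≤ t → t ≤ α v → δ w ≤ t → t ≤ α w →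
      False := by
    intro v w t hvw hpt htq h1 h2 h3 h4
    obtain ⟨c, c0, hc0, hc⟩ := R.hc t
    have hcard : ∀ u, δ u ≤ t → t ≤ α u →
        3 ≤ (K.filter (fun i => R.lo i u ≤ t ∧ t ≤ R.hi i u)).card := by
      intro u hu1 hu2
      have hsub : K ⊆ (K.filter (fun i => R.lo i u ≤ t ∧ t ≤ R.hi i u)) ∪
          ((K.filter (fun i => R.hi i u < α u)) ∪ (K.filter (fun i => δ u < R.lo i u))) := by
        intro x hx
        simp only [Finset.mem_union, Finset.mem_filter, hx, true_and]
        omega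
      have e1 := Finset.card_le_card hsub
      have e2 := Finset.card_union_le (K.filter (fun i => R.lo i u ≤ t ∧ t ≤ R.hi i u))
        ((K.filter (fun i => R.hi i u < α u)) ∪ (K.filter (fun i => δ u < R.lo i u)))
      have e3 := Finset.card_union_le (K.filter (fun i => R.hi i u < α u))
        (K.filter (fun i => δ u < R.lo i u))
      have := hα2 u
      have := hδ2 u
      omega
    have cv := hcard v h1 h2
    have cw := hcard w h3 h4
    obtain ⟨k, hk⟩ : ((K.filter (fun i => R.lo i v ≤ t ∧ t ≤ R.hi i v)) ∩
        (K.filter (fun i => R.lo i w ≤ t ∧ t ≤ R.hi i w))).Nonempty := by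
      apply Finset.inter_nonempty_of_card_lt_card_add_card (s := K) (Finset.filter_subset _ _)
        (Finset.filter_subset _ _)
      omega
    simp only [Finset.mem_inter, Finset.mem_filter] at hk
    obtain ⟨⟨hkK, hv1, hv2⟩, -, hw1, hw2⟩ := hk
    have e := big_const (fun k => R.lo k v ≤ t ∧ t ≤ R.hi k v)
      (fun k => R.lo k w ≤ t ∧ t ≤ R.hi k w) (fun k => c k v) (fun k => c k w)
      (fun x y hxy hx hy => hc x y v w hxy hvw hx.1 hx.2 hy.1 hy.2) _ _ cv cw
      (fun x hx => (Finset.mem_filter.1 hx).2) (fun x hx => (Finset.mem_filter.1 hx).2) k k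
      ⟨hv1, hv2⟩ ⟨hw1, hw2⟩
    have l1 := (hK' k hkK).1.trans hpt
    have l2 := htq.trans (hK' k hkK).2
    have e1 := hc0 k v l1 l2 hv1 hv2
    have e2 := hc0 k w l1 l2 hw1 hw2
    revert e e1 e2
    cases c k v <;> cases c k w <;> cases c0 k <;> simp
  let f : V → Bool := fun v =>
    if α v < p then (if δ v ≤ q then fA v else true)
    else if q < δ v then fD v
    else decide (α v < δ v)
  have hfa : ∀ v w, H.Adj v w → α v < p → f v ≠ f w := by
    intro v w hvw hv
    have h1 := hcross v w hvw
    by_cases hw : α w < p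
    · have h2 := hcross w v hvw.symm
      simp only [f, if_pos hv, if_pos hw, if_pos (show δ v ≤ q by omega),
        if_pos (show δ w ≤ q by omega)]
      exact hfA2 v w hvw hv
    · have e1 : f w = false := by
        simp only [f, if_neg hw, if_neg (show ¬ q < δ w by omega), decide_eq_false_iff_not]
        omega
      rw [e1]
      by_cases hd : δ v ≤ q
      · simp only [f, if_pos hv, if_pos hd]
        have := hfA2 v w hvw hv
        rwa [hfA1 w hw] at this
      · simp only [f, if_pos hv, if_neg hd]
        simp
  have hfd : ∀ v w, H.Adj v w → ¬ α v < p → ¬ α w < p → q < δ v → f v ≠ f w := by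
    intro v w hvw hv hw hd
    by_cases hdw : q < δ w
    · simp only [f, if_neg hv, if_neg hw, if_pos hd, if_pos hdw]
      exact hfD2 v w hvw hd
    · have h2 := hcross w v hvw.symm
      have e1 : f w = false := by
        simp only [f, if_neg hw, if_neg hdw, decide_eq_false_iff_not]
        omega
      rw [e1]
      simp only [f, if_neg hv, if_pos hd]
      have := hfD2 v w hvw hd
      rwa [hfD1 w hdw] at this
  refine hH ⟨f, ?_⟩
  intro v w hvw
  by_cases hv : α v < p
  · exact hfa v w hvw hv
  by_cases hw : α w < p
  · exact (hfa w v hvw.symm hw).symm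
  by_cases hdv : q < δ v
  · exact hfd v w hvw hv hw hdv
  by_cases hdw : q < δ w
  · exact (hfd w v hvw.symm hw hv hdw).symm
  have h1 := hcross v w hvw
  have h2 := hcross w v hvw.symm
  simp only [f, if_neg hv, if_neg hw, if_neg hdv, if_neg hdw, ne_eq, decide_eq_decide]
  intro hiff
  by_cases hr : α v < δ v
  · have := hiff.1 hr
    omega
  · have hr' : ¬ α w < δ w := fun h => hr (hiff.2 h)
    exact hBB v w (max p (max (δ v) (δ w))) hvw (by omega) (by omega) (by omega) (by omega)
      (by omega) (by omega)

lemma core {V : Type} {H : SimpleGraph V} {ι : Type} [DecidableEq ι] [Fintype ι] (R : BipRep H ι)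
    (hH : ¬ ∃ f : V → Bool, ∀ u v, H.Adj u v → f u ≠ f v) (hm : 9 ≤ Fintype.card ι) : False := by
  classical
  obtain ⟨Lt, -, hLt, j, hj, hLj, hLc⟩ := order_stat R.hi0 2 Finset.univ
    (by rw [Finset.card_univ]; omega)
  obtain ⟨Rt, -, hRt, k, hk, hRk, hRc⟩ := order_stat (fun i => - R.lo0 i) 2 Finset.univ
    (by rw [Finset.card_univ]; omega)
  simp only [neg_le_neg_iff, neg_lt_neg_iff] at hRk hRc
  by_cases h : R.hi0 j ≤ R.lo0 k
  · exact core_case1 R hH (R.hi0 j) Lt Rt hLt.ge hRt.ge hLj (fun i hi => h.trans (hRk i hi)) j hj rfl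
  · have hsub : (Finset.univ : Finset ι) ⊆
        (Finset.univ.filter (fun i => R.lo0 i ≤ R.lo0 k ∧ R.hi0 j ≤ R.hi0 i)) ∪
        ((Finset.univ.filter (fun i => R.hi0 i < R.hi0 j)) ∪
          (Finset.univ.filter (fun i => R.lo0 k < R.lo0 i))) := by
      intro x hx
      simp only [Finset.mem_union, Finset.mem_filter, hx, true_and]
      omega
    have e1 := Finset.card_le_card hsub
    have e2 := Finset.card_union_le
      (Finset.univ.filter (fun i => R.lo0 i ≤ R.lo0 k ∧ R.hi0 j ≤ R.hi0 i))
      ((Finset.univ.filter (fun i => R.hi0 i < R.hi0 j)) ∪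
          (Finset.univ.filter (fun i => R.lo0 k < R.lo0 i)))
    have e3 := Finset.card_union_le (Finset.univ.filter (fun i => R.hi0 i < R.hi0 j))
          (Finset.univ.filter (fun i => R.lo0 k < R.lo0 i))
    rw [Finset.card_univ] at e1
    obtain ⟨K, hKs, hK⟩ := Finset.exists_subset_card_eq (s :=
      (Finset.univ.filter (fun i => R.lo0 i ≤ R.lo0 k ∧ R.hi0 j ≤ R.hi0 i))) (n := 5) (by omega)
    exact core_case2 R hH (R.lo0 k) (R.hi0 j) (by omega) Lt Rt K hLt.ge hRt.ge hLj hRk hK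
      (fun x hx => (Finset.mem_filter.1 (hKs hx)).2)

lemma Rm_adj {V : Type} {H : SimpleGraph V} {m : ℕ} (p q : Fin m × Option V) :
    (Rm H m).Adj p q ↔ (p.1 = q.1 ∧ ((p.2 = none ∧ q.2 ≠ none) ∨ (p.2 ≠ none ∧ q.2 = none))) ∨
      (p.1 ≠ q.1 ∧ ∃ u v, p.2 = some u ∧ q.2 = some v ∧ H.Adj u v) := by
  obtain ⟨i, x⟩ := p
  obtain ⟨j, y⟩ := q
  simp only [Rm, SimpleGraph.fromRel_adj, ne_eq, Prod.mk.injEq]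
  constructor
  · rintro ⟨hne, (⟨h1, h2⟩ | ⟨h1, u, v, h2, h3, h4⟩) | (⟨h1, h2⟩ | ⟨h1, u, v, h2, h3, h4⟩)⟩
    · left
      refine ⟨h1, Or.inl ⟨h2, fun h => hne ⟨h1, h2.trans h.symm⟩⟩⟩
    · right
      exact ⟨h1, u, v, h2, h3, h4⟩
    · left
      refine ⟨h1.symm, Or.inr ⟨fun h => hne ⟨h1.symm, h.trans h2.symm⟩, h2⟩⟩
    · right
      exact ⟨fun h => h1 h.symm, v, u, h3, h2, h4.symm⟩
  · rintro (⟨h1, ⟨h2, h3⟩ | ⟨h2, h3⟩⟩ | ⟨h1, u, v, h2, h3, h4⟩)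
    · exact ⟨fun h => h3 (h.2 ▸ h2), Or.inl (Or.inl ⟨h1, h2⟩)⟩
    · exact ⟨fun h => h2 (h.2.trans h3), Or.inr (Or.inl ⟨h1.symm, h3⟩)⟩
    · exact ⟨fun h => h1 h.1, Or.inl (Or.inr ⟨h1, u, v, h2, h3, h4⟩)⟩

lemma Rm_adj_center {V : Type} {H : SimpleGraph V} {m : ℕ} (i : Fin m) (v : V) :
    (Rm H m).Adj (i, none) (i, some v) := by
  rw [Rm_adj]; simp

lemma Rm_adj_some {V : Type} {H : SimpleGraph V} {m : ℕ} {i j : Fin m} {u v : V} (hij : i ≠ j)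
    (h : H.Adj u v) : (Rm H m).Adj (i, some u) (j, some v) := by
  rw [Rm_adj]; simp [hij, h]

lemma cyc_adj {n : ℕ} (hn : 3 ≤ n) (a b : Fin n) : (cyc n).Adj a b ↔
    ((a : ℕ) + 1 = b ∨ (b : ℕ) + 1 = a ∨ ((a : ℕ) = 0 ∧ (b : ℕ) + 1 = n) ∨
      ((b : ℕ) = 0 ∧ (a : ℕ) + 1 = n)) := by
  have ha := a.2
  have hb := b.2
  simp only [cyc, SimpleGraph.fromRel_adj, ne_eq, Fin.ext_iff]
  omega

lemma cyc_not_bip {n : ℕ} (hn : 3 ≤ n) (hodd : Odd n) :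
    ¬ ∃ f : Fin n → Bool, ∀ u v, (cyc n).Adj u v → f u ≠ f v := by
  rintro ⟨f, hf⟩
  have key : ∀ j : ℕ, ∀ h : j < n, f ⟨j, h⟩ = (f ⟨0, by omega⟩ ^^ decide (j % 2 = 1)) := by
    intro j
    induction j with
    | zero => intro h; simp
    | succ j ih =>
      intro h
      have h1 := hf ⟨j, by omega⟩ ⟨j + 1, h⟩ ((cyc_adj hn _ _).2 (Or.inl rfl))
      rw [ih (by omega)] at h1
      rcases Nat.mod_two_eq_zero_or_one j with h2 | h2
      · have h3 : (j + 1) % 2 = 1 := by omega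
        rw [h3]; rw [h2] at h1
        revert h1
        cases f ⟨0, by omega⟩ <;> cases f ⟨j + 1, h⟩ <;> simp
      · have h3 : (j + 1) % 2 = 0 := by omega
        rw [h3]; rw [h2] at h1
        revert h1
        cases f ⟨0, by omega⟩ <;> cases f ⟨j + 1, h⟩ <;> simp
  have h1 := hf ⟨0, by omega⟩ ⟨n - 1, by omega⟩ ((cyc_adj hn _ _).2
    (Or.inr (Or.inr (Or.inl ⟨rfl, by simp only; omega⟩))))
  rw [key (n - 1) (by omega)] at h1
  have h2 : (n - 1) % 2 = 0 := by
    obtain ⟨r, hr⟩ := hodd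
    omega
  simp [h2] at h1

/-- No path-decomposition of `R_m(H)` has all bags bipartite. -/
lemma no_path_two {n m : ℕ} (H : SimpleGraph (Fin n))
    (hH : ¬ ∃ f : Fin n → Bool, ∀ u v, H.Adj u v → f u ≠ f v) (hm : 9 ≤ m)
    (s : ℕ) (B : Fin s → Set (Fin m × Option (Fin n))) (hB : IsPathDecomp (Rm H m) B)
    (hcol : ∀ t, ((Rm H m).induce (B t)).Colorable 2) : False := by
  classical
  obtain ⟨hb1, hb2, hb3⟩ := hB
  have hint : ∀ x, ∃ a b : Fin s, ∀ t, x ∈ B t ↔ a ≤ t ∧ t ≤ b := by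
    intro x
    obtain ⟨t0, ht0⟩ := hb1 x
    have hne : (Finset.univ.filter (fun t => x ∈ B t)).Nonempty := ⟨t0, by simpa using ht0⟩
    refine ⟨(Finset.univ.filter (fun t => x ∈ B t)).min' hne,
      (Finset.univ.filter (fun t => x ∈ B t)).max' hne,
      fun t => ⟨fun h => ⟨Finset.min'_le _ t (by simpa using h),
      Finset.le_max' _ t (by simpa using h)⟩, fun h => ?_⟩⟩
    have e1 := (Finset.mem_filter.1 (Finset.min'_mem _ hne)).2
    have e2 := (Finset.mem_filter.1 (Finset.max'_mem _ hne)).2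
    exact hb3 x _ t _ h.1 h.2 e1 e2
  choose a b hab using hint
  have hadj : ∀ x y, (Rm H m).Adj x y → ((a x : ℕ) : ℤ) ≤ ((b y : ℕ) : ℤ) := by
    intro x y hxy
    obtain ⟨t, h1, h2⟩ := hb2 x y hxy
    have := ((hab x t).1 h1).1.trans ((hab y t).1 h2).2
    exact_mod_cast this
  have hself : ∀ x, ((a x : ℕ) : ℤ) ≤ ((b x : ℕ) : ℤ) := by
    intro x
    obtain ⟨t, h1⟩ := hb1 x
    have := ((hab x t).1 h1).1.trans ((hab x t).1 h1).2
    exact_mod_cast this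
  have hcc : ∀ t : ℤ, ∃ c : Fin m × Option (Fin n) → Bool, ∀ x y, (Rm H m).Adj x y →
      ((a x : ℕ) : ℤ) ≤ t → t ≤ ((b x : ℕ) : ℤ) → ((a y : ℕ) : ℤ) ≤ t → t ≤ ((b y : ℕ) : ℤ) →
      c x ≠ c y := by
    intro t
    by_cases ht : 0 ≤ t ∧ t < s
    · obtain ⟨t', rfl⟩ := Int.eq_ofNat_of_zero_le ht.1
      have ht' : t' < s := by exact_mod_cast ht.2
      obtain ⟨C⟩ := hcol ⟨t', ht'⟩
      refine ⟨fun x => if h : x ∈ B ⟨t', ht'⟩ then decide (C ⟨x, h⟩ = 0) else false, ?_⟩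
      intro x y hxy h1 h2 h3 h4
      have hx : x ∈ B ⟨t', ht'⟩ := (hab x _).2 ⟨by exact_mod_cast h1, by exact_mod_cast h2⟩
      have hy : y ∈ B ⟨t', ht'⟩ := (hab y _).2 ⟨by exact_mod_cast h3, by exact_mod_cast h4⟩
      have hv : C ⟨x, hx⟩ ≠ C ⟨y, hy⟩ := C.valid (by simpa using hxy)
      simp only [dif_pos hx, dif_pos hy, ne_eq, decide_eq_decide]
      revert hv
      generalize C ⟨x, hx⟩ = p
      generalize C ⟨y, hy⟩ = q
      revert p q
      decide
    · refine ⟨fun _ => false, ?_⟩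
      intro x y _ h1 h2
      have := (b x).2
      omega
  let R : BipRep H (Fin m) :=
    { lo := fun i v => ((a (i, some v) : ℕ) : ℤ)
      hi := fun i v => ((b (i, some v) : ℕ) : ℤ)
      lo0 := fun i => ((a (i, none) : ℕ) : ℤ)
      hi0 := fun i => ((b (i, none) : ℕ) : ℤ)
      h0 := fun i => hself _
      h1 := fun i v => hadj _ _ (Rm_adj_center i v).symm
      h2 := fun i v => hadj _ _ (Rm_adj_center i v)
      h3 := fun i j u v hij huv => hadj _ _ (Rm_adj_some hij huv)
      hc := fun t => by
        obtain ⟨c, hc⟩ := hcc t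
        exact ⟨fun i v => c (i, some v), fun i => c (i, none),
          fun i v h1 h2 h3 h4 => hc _ _ (Rm_adj_center i v) h1 h2 h3 h4,
          fun i j u v hij huv h1 h2 h3 h4 => hc _ _ (Rm_adj_some hij huv) h1 h2 h3 h4⟩ }
  exact core R hH (by simpa using hm)

/-- Path-decomposition with 3-colourable bags. -/
lemma path_three {n m : ℕ} (hn : 5 ≤ n) :
    ∃ (s : ℕ) (B : Fin s → Set (Fin m × Option (Fin n))), IsPathDecomp (Rm (cyc n) m) B ∧
      ∀ t, ((Rm (cyc n) m).induce (B t)).Colorable 3 := by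
  classical
  let z : Fin n := ⟨0, by omega⟩
  refine ⟨m, fun i => {x | x.1 = i ∨ ∃ v, v ≠ z ∧ x.2 = some v}, ⟨?_, ?_, ?_⟩, ?_⟩
  · intro x
    exact ⟨x.1, Or.inl rfl⟩
  · rintro ⟨i, x⟩ ⟨j, y⟩ hxy
    rw [Rm_adj] at hxy
    rcases hxy with ⟨h1, -⟩ | ⟨h1, u, v, h2, h3, h4⟩
    · exact ⟨i, Or.inl rfl, Or.inl h1.symm⟩
    · by_cases hu : u = z
      · refine ⟨i, Or.inl rfl, Or.inr ⟨v, ?_, h3⟩⟩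
        rintro rfl
        exact h4.ne hu
      · exact ⟨j, Or.inr ⟨u, hu, h2⟩, Or.inl rfl⟩
  · rintro x t1 t2 t3 h12 h23 (h1 | h1) (h3 | h3)
    · left
      rw [← h3, h1] at h23
      rw [h1]
      exact le_antisymm h12 h23
    · exact Or.inr h3
    · exact Or.inr h1
    · exact Or.inr h1
  · intro i
    refine ⟨SimpleGraph.Coloring.mk (fun x : {x : Fin m × Option (Fin n) | x.1 = i ∨ ∃ v, v ≠ z ∧ x.2 = some v} =>
      (match x.1.2 with
        | none => (0 : Fin 3)
        | some v => if x.1.1 = i then 2 else if (v : ℕ) % 2 = 0 then 0 else 1)) ?_⟩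
    rintro ⟨⟨j, x⟩, hx⟩ ⟨⟨k, y⟩, hy⟩ hxy
    have hxy' : (Rm (cyc n) m).Adj (j, x) (k, y) := by simpa using hxy
    rw [Rm_adj] at hxy'
    simp only [Set.mem_ofPred_eq] at hx hy
    rcases hxy' with ⟨h1, ⟨h2, h3⟩ | ⟨h2, h3⟩⟩ | ⟨h1, u, v, h2, h3, h4⟩
    · simp only at h1 h2 h3
      subst h2
      have hji : j = i := by
        rcases hx with h | ⟨v, -, h⟩
        · exact h
        · cases h
      cases y with
      | none => exact absurd rfl h3
      | some v => simp [← h1, hji]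
    · simp only at h1 h2 h3
      subst h3
      have hki : k = i := by
        rcases hy with h | ⟨v, -, h⟩
        · exact h
        · cases h
      cases x with
      | none => exact absurd rfl h2
      | some v => simp [h1, hki]
    · simp only at h1 h2 h3
      subst h2 h3
      by_cases hj : j = i
      · have hk : k ≠ i := fun h => h1 (hj.trans h.symm)
        simp only [hj, hk, if_true, if_false]
        split_ifs <;> decide
      · by_cases hk : k = i
        · simp only [hj, hk, if_true, if_false]
          split_ifs <;> decide
        · have hu : (u : ℕ) ≠ 0 := by
            rcases hx with h | ⟨w, hw, h⟩
            · exact absurd h hj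
            · cases h; intro h; exact hw (Fin.ext h)
          have hv : (v : ℕ) ≠ 0 := by
            rcases hy with h | ⟨w, hw, h⟩
            · exact absurd h hk
            · cases h; intro h; exact hw (Fin.ext h)
          rw [cyc_adj (by omega)] at h4
          simp only [hj, hk, if_false]
          clear hxy hx hy
          split_ifs
          · omega
          · decide
          · decide
          · omega

/-- Tree-decomposition with bipartite bags. -/
lemma tree_two {n m : ℕ} (hn : 5 ≤ n) :
    ∃ (ι : Type) (T : SimpleGraph ι) (B : ι → Set (Fin m × Option (Fin n))),
      IsTreeDecomp (Rm (cyc n) m) T B ∧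
      ∀ t, ((Rm (cyc n) m).induce (B t)).Colorable 2 := by
  classical
  let z : Fin n := ⟨0, by omega⟩
  let B : Option (Fin m) → Set (Fin m × Option (Fin n)) := fun t => match t with
    | none => {x | ∃ v, v ≠ z ∧ x.2 = some v}
    | some i => {x | x.1 = i ∨ ∃ v, (cyc n).Adj z v ∧ x.2 = some v}
  refine ⟨Option (Fin m), SimpleGraph.starGraph none, B,
    ⟨SimpleGraph.isTree_starGraph none, ?_, ?_, ?_⟩, ?_⟩
  · intro x
    exact ⟨some x.1, Or.inl rfl⟩
  · rintro ⟨i, x⟩ ⟨j, y⟩ hxy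
    rw [Rm_adj] at hxy
    rcases hxy with ⟨h1, -⟩ | ⟨h1, u, v, h2, h3, h4⟩
    · exact ⟨some i, Or.inl rfl, Or.inl h1.symm⟩
    · by_cases hu : u = z
      · exact ⟨some i, Or.inl rfl, Or.inr ⟨v, hu ▸ h4, h3⟩⟩
      · by_cases hv : v = z
        · exact ⟨some j, Or.inr ⟨u, hv ▸ h4.symm, h2⟩, Or.inl rfl⟩
        · exact ⟨none, ⟨u, hu, h2⟩, ⟨v, hv, h3⟩⟩
  · rintro ⟨i, x⟩
    by_cases hx : ∃ v, v ≠ z ∧ x = some v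
    · have hmem : (none : Option (Fin m)) ∈ {t | (i, x) ∈ B t} := hx
      apply SimpleGraph.Connected.of_isUniversal (v := ⟨none, hmem⟩)
      intro w hw
      exact SimpleGraph.starGraph_center_adj (fun h => hw (Subtype.ext h))
    · have hmem : (some i : Option (Fin m)) ∈ {t | (i, x) ∈ B t} := Or.inl rfl
      have huniq : ∀ t, (i, x) ∈ B t → t = some i := by
        intro t ht
        match t, ht with
        | none, ht => exact absurd ht hx
        | some j, ht =>
          rcases ht with h | ⟨v, hv, h⟩
          · exact congrArg some h.symm
          · exact absurd ⟨v, fun h' => hv.ne h'.symm, h⟩ hx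
      apply SimpleGraph.Connected.of_isUniversal (v := ⟨some i, hmem⟩)
      intro w hw
      exact absurd (Subtype.ext (huniq w.1 w.2).symm) hw
  · intro t
    match t with
    | none =>
      refine ⟨SimpleGraph.Coloring.mk (fun x : B none =>
        (match x.1.2 with
          | none => (0 : Fin 2)
          | some v => if (v : ℕ) % 2 = 0 then 0 else 1)) ?_⟩
      rintro ⟨⟨j, x⟩, u, hu, hx⟩ ⟨⟨k, y⟩, v, hv, hy⟩ hxy
      have hxy' : (Rm (cyc n) m).Adj (j, x) (k, y) := by simpa using hxy
      simp only at hx hy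
      subst hx hy
      rw [Rm_adj] at hxy'
      rcases hxy' with ⟨h1, ⟨h2, h3⟩ | ⟨h2, h3⟩⟩ | ⟨h1, u', v', h2, h3, h4⟩
      · cases h2
      · cases h3
      · cases h2
        cases h3
        rw [cyc_adj (by omega)] at h4
        have hu' : (u : ℕ) ≠ 0 := fun h => hu (Fin.ext h)
        have hv' : (v : ℕ) ≠ 0 := fun h => hv (Fin.ext h)
        simp only
        split_ifs
        · omega
        · decide
        · decide
        · omega
    | some i =>
      refine ⟨SimpleGraph.Coloring.mk (fun x : B (some i) =>
        if x.1.1 = i ∧ x.1.2 ≠ none then (0 : Fin 2) else 1) ?_⟩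
      rintro ⟨⟨j, x⟩, hx⟩ ⟨⟨k, y⟩, hy⟩ hxy
      have hxy' : (Rm (cyc n) m).Adj (j, x) (k, y) := by simpa using hxy
      rw [Rm_adj] at hxy'
      rcases hxy' with ⟨h1, ⟨h2, h3⟩ | ⟨h2, h3⟩⟩ | ⟨h1, u, v, h2, h3, h4⟩
      · simp only at h1 h2 h3
        subst h2
        have hji : j = i := by
          rcases hx with h | ⟨v, -, h⟩
          · exact h
          · cases h
        simp [← h1, hji, h3]
      · simp only at h1 h2 h3
        subst h3
        have hki : k = i := by
          rcases hy with h | ⟨v, -, h⟩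
          · exact h
          · cases h
        simp [h1, hki, h2]
      · simp only at h1 h2 h3
        subst h2 h3
        by_cases hj : j = i
        · have hk : k ≠ i := fun h => h1 (hj.trans h.symm)
          simp [hj, hk]
        · by_cases hk : k = i
          · simp [hj, hk]
          · exfalso
            have hu : (cyc n).Adj z u := by
              rcases hx with h | ⟨w, hw, h⟩
              · exact absurd h hj
              · cases h; exact hw
            have hv : (cyc n).Adj z v := by
              rcases hy with h | ⟨w, hw, h⟩
              · exact absurd h hk
              · cases h; exact hw
            rw [cyc_adj (by omega)] at hu hv h4
            have hz : (z : ℕ) = 0 := rfl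
            omega

lemma cyc_exists_adj {n : ℕ} (hn : 5 ≤ n) (v : Fin n) : ∃ w, (cyc n).Adj v w := by
  have hv := v.2
  by_cases h : (v : ℕ) + 1 < n
  · exact ⟨⟨v + 1, h⟩, (cyc_adj (by omega) _ _).2 (Or.inl rfl)⟩
  · exact ⟨⟨0, by omega⟩, (cyc_adj (by omega) _ _).2
      (Or.inr (Or.inr (Or.inr ⟨rfl, by omega⟩)))⟩

lemma Rm_connected {n m : ℕ} (hn : 5 ≤ n) (hm : n ≤ m)
    (U : Set (Fin m × Option (Fin n))) (hU : U.ncard < n) :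
    ((Rm (cyc n) m).induce Uᶜ).Connected := by
  classical
  obtain ⟨j, hj⟩ : ∃ j : Fin m, ∀ x, (j, x) ∉ U := by
    by_contra hcon
    push Not at hcon
    choose g hg using hcon
    have h1 : (Set.range (fun j : Fin m => (j, g j))).ncard ≤ U.ncard :=
      Set.ncard_le_ncard (by rintro _ ⟨j, rfl⟩; exact hg j) (Set.toFinite U)
    have hinj : Function.Injective (fun j : Fin m => (j, g j)) := fun a b h =>
      congrArg Prod.fst h
    rw [← Set.image_univ, Set.ncard_image_of_injective _ hinj, Set.ncard_univ, Nat.card_fin] at h1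
    omega
  have hrow : ∀ i : Fin m, ∃ v : Fin n, (i, some v) ∉ U := by
    intro i
    by_contra hcon
    push Not at hcon
    have h1 : (Set.range (fun v : Fin n => (i, some v))).ncard ≤ U.ncard :=
      Set.ncard_le_ncard (by rintro _ ⟨j, rfl⟩; exact hcon j) (Set.toFinite U)
    have hinj : Function.Injective (fun v : Fin n => (i, some v)) := fun a b h => by
      simpa using h
    rw [← Set.image_univ, Set.ncard_image_of_injective _ hinj, Set.ncard_univ, Nat.card_fin] at h1
    omega
  let G' := (Rm (cyc n) m).induce Uᶜ
  have step : ∀ (x y : Fin m × Option (Fin n)) (hx : x ∈ Uᶜ) (hy : y ∈ Uᶜ),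
      (Rm (cyc n) m).Adj x y → G'.Reachable ⟨x, hx⟩ ⟨y, hy⟩ := by
    intro x y hx hy h
    apply SimpleGraph.Adj.reachable
    simpa [G'] using h
  have hsome : ∀ (i : Fin m) (v : Fin n) (h : (i, some v) ∈ Uᶜ),
      G'.Reachable ⟨(i, some v), h⟩ ⟨(j, none), hj none⟩ := by
    intro i v h
    by_cases hij : i = j
    · subst hij
      exact step _ _ _ _ (Rm_adj_center i v).symm
    · obtain ⟨w, hw⟩ := cyc_exists_adj hn v
      exact (step _ (j, some w) h (hj _) (Rm_adj_some hij hw)).trans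
        (step _ _ _ _ (Rm_adj_center j w).symm)
  have hall : ∀ x : (Uᶜ : Set _), G'.Reachable x ⟨(j, none), hj none⟩ := by
    rintro ⟨⟨i, x⟩, hx⟩
    cases x with
    | some v => exact hsome i v hx
    | none =>
      obtain ⟨v, hv⟩ := hrow i
      exact (step _ _ hx hv (Rm_adj_center i v)).trans (hsome i v hv)
  have : Nonempty (Uᶜ : Set (Fin m × Option (Fin n))) := ⟨⟨(j, none), hj none⟩⟩
  exact ⟨fun x y => (hall x).trans (hall y).symm⟩

lemma main_part {k n m : ℕ} (hk : 1 ≤ k) (hodd : Odd n) (hn : 5 ≤ n) (hkn : k ≤ n)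
    (hm : n + 4 ≤ m) :
    (∀ U : Set (Fin m × Option (Fin n)), U.ncard ≤ k - 1 →
        ((Rm (cyc n) m).induce Uᶜ).Connected) ∧
      treeChromatic (Rm (cyc n) m) = 2 ∧
      pathChromatic (Rm (cyc n) m) = 3 := by
  refine ⟨fun U hU => Rm_connected hn (by omega) U (by omega), ?_, ?_⟩
  · apply le_antisymm
    · exact Nat.sInf_le (tree_two hn)
    · apply le_csInf ⟨2, tree_two hn⟩
      rintro r ⟨ι, T, B, ⟨-, -, hB, -⟩, hcol⟩
      by_contra hr
      have hadj := Rm_adj_center (H := cyc n) (m := m) ⟨0, by omega⟩ ⟨0, by omega⟩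
      obtain ⟨t, h1, h2⟩ := hB _ _ hadj
      obtain ⟨C⟩ := (hcol t).mono (show r ≤ 1 by omega)
      have hv : C ⟨_, h1⟩ ≠ C ⟨_, h2⟩ := C.valid (by simpa using hadj)
      exact hv (Subsingleton.elim _ _)
  · apply le_antisymm
    · exact Nat.sInf_le (path_three hn)
    · apply le_csInf ⟨3, path_three hn⟩
      rintro r ⟨s, B, hB, hcol⟩
      by_contra hr
      exact no_path_two (cyc n) (cyc_not_bip (by omega) hodd) (by omega) s B hB
        (fun t => (hcol t).mono (by omega))

/-- Corollary: for every `k ≥ 1` there is a `k`-connected graph with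
`χ_T ≠ χ_P`; specifically, for odd `n ≥ max(5,k)` and `m ≥ n + 4` the graph `R_m(C_n)` is
`k`-connected with tree-chromatic number `2` and path-chromatic number `3`. -/
theorem stmt_15 (k : ℕ) (hk : 1 ≤ k) :
    (∃ (W : Type) (G : SimpleGraph W),
      (∀ U : Set W, U.ncard ≤ k - 1 → (G.induce Uᶜ).Connected) ∧
      treeChromatic G ≠ pathChromatic G) ∧
    ∀ n m : ℕ, Odd n → 5 ≤ n → k ≤ n → n + 4 ≤ m →
      (∀ U : Set (Fin m × Option (Fin n)), U.ncard ≤ k - 1 →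
        ((Rm (cyc n) m).induce Uᶜ).Connected) ∧
      treeChromatic (Rm (cyc n) m) = 2 ∧
      pathChromatic (Rm (cyc n) m) = 3 := by
  refine ⟨?_, fun n m hodd hn hkn hm => main_part hk hodd hn hkn hm⟩
  obtain ⟨h1, h2, h3⟩ := main_part (n := 2 * k + 5) (m := 2 * k + 9) hk
    ⟨k + 2, by omega⟩ (by omega) (by omega) (by omega)
  exact ⟨_, _, h1, by rw [h2, h3]; decide⟩
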